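/- arXiv:2511.03095 — 5 statements merged into one kernel-verified Lean document; each statement's English description precedes it below -/
import Mathlib

section
/- Radial influence of points on kernel locations: for the SparKer model f and any fixed data point x ∈ ℝ^d, the gradient of f(x) with respect to the i-th kernel location μ_i (i.e., the gradient at m = μ_i of the map m ↦ f(x) computed with μ_i replaced by m, all other parameters fixed) equals A_i(x) • (x − μ_i), where A_i(x) = (1/σ²) · (2 a_i k_{μ_i}^σ(x) − f(x)) · p_i(x). -/
open Real Finset

/-- Gaussian kernel with location `μ` and width `σ`. -/
noncomputable def gaussKernel {d : ℕ} (σ : ℝ) (μ x : EuclideanSpace ℝ (Fin d)) : ℝ :=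
  Real.exp (-‖x - μ‖ ^ 2 / (2 * σ ^ 2))

/-- SoftMax activation of the `i`-th kernel in the SparKer ensemble. -/
noncomputable def softmaxAct {d M : ℕ} (σ : ℝ) (μ : Fin M → EuclideanSpace ℝ (Fin d))
    (i : Fin M) (x : EuclideanSpace ℝ (Fin d)) : ℝ :=
  gaussKernel σ (μ i) x / ∑ j, gaussKernel σ (μ j) x

/-- The SparKer model: sparse ensemble of Gaussian kernels with SoftMax competition. -/
noncomputable def sparker {d M : ℕ} (σ : ℝ) (μ : Fin M → EuclideanSpace ℝ (Fin d))
    (a : Fin M → ℝ) (x : EuclideanSpace ℝ (Fin d)) : ℝ :=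
  ∑ i, a i * (softmaxAct σ μ i x * gaussKernel σ (μ i) x)

/-- Gradient of the Gaussian kernel with respect to its location. -/
theorem gaussKernel_hasFDerivAt {d : ℕ} (σ : ℝ) (hσ : 0 < σ) (m x : EuclideanSpace ℝ (Fin d)) :
    HasFDerivAt (fun m => gaussKernel σ m x)
      ((gaussKernel σ m x / σ ^ 2) • innerSL ℝ (x - m)) m := by
  have h1 : HasFDerivAt (fun m : EuclideanSpace ℝ (Fin d) => x - m)
      (-ContinuousLinearMap.id ℝ (EuclideanSpace ℝ (Fin d))) m :=
    (hasFDerivAt_id m).const_sub x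
  have h2 := h1.norm_sq
  have h3 : HasDerivAt (fun t : ℝ => Real.exp (-t / (2 * σ ^ 2)))
      (Real.exp (-‖x - m‖ ^ 2 / (2 * σ ^ 2)) * (-1 / (2 * σ ^ 2))) (‖x - m‖ ^ 2) :=
    (((hasDerivAt_id (‖x - m‖ ^ 2)).neg).div_const (2 * σ ^ 2)).exp
  have h4 := h3.comp_hasFDerivAt m h2
  refine h4.congr_fderiv ?_
  ext v
  simp [gaussKernel]
  field_simp
  ring

theorem sparker_eq {d M : ℕ} (σ : ℝ) (μ : Fin M → EuclideanSpace ℝ (Fin d))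
    (a : Fin M → ℝ) (i : Fin M) (x m : EuclideanSpace ℝ (Fin d)) :
    sparker σ (Function.update μ i m) a x =
      (a i * gaussKernel σ m x ^ 2 + ∑ j ∈ univ.erase i, a j * gaussKernel σ (μ j) x ^ 2) /
      (gaussKernel σ m x + ∑ j ∈ univ.erase i, gaussKernel σ (μ j) x) := by
  have hS : ∑ j, gaussKernel σ (Function.update μ i m j) x =
      gaussKernel σ m x + ∑ j ∈ univ.erase i, gaussKernel σ (μ j) x := by
    rw [← Finset.add_sum_erase _ _ (Finset.mem_univ i), Function.update_self]
    congr 1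
    refine Finset.sum_congr rfl fun j hj => ?_
    rw [Function.update_of_ne (Finset.ne_of_mem_erase hj)]
  unfold sparker softmaxAct
  rw [hS, ← Finset.add_sum_erase _ _ (Finset.mem_univ i), Function.update_self, add_div,
    Finset.sum_div]
  congr 1
  · ring
  · refine Finset.sum_congr rfl fun j hj => ?_
    rw [Function.update_of_ne (Finset.ne_of_mem_erase hj)]
    ring

/-- radial influence of points on kernel locations.  The gradient of the SparKer
model value `f(x)` with respect to the `i`-th kernel location `μ i` equals
`A_i(x) • (x − μ_i)` with `A_i(x) = (1/σ²)(2 a_i k_{μ_i}^σ(x) − f(x)) p_i(x)`. -/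
theorem sparker_gradient_location (d M : ℕ) (hd : 1 ≤ d)
    (σ : ℝ) (hσ : 0 < σ) (μ : Fin M → EuclideanSpace ℝ (Fin d)) (a : Fin M → ℝ)
    (i : Fin M) (x : EuclideanSpace ℝ (Fin d)) :
    gradient (fun m : EuclideanSpace ℝ (Fin d) =>
        sparker σ (Function.update μ i m) a x) (μ i) =
      ((1 / σ ^ 2) * (2 * a i * gaussKernel σ (μ i) x - sparker σ μ a x) *
        softmaxAct σ μ i x) • (x - μ i) := by
  have hk : 0 < gaussKernel σ (μ i) x := Real.exp_pos _
  have hD : 0 ≤ ∑ j ∈ univ.erase i, gaussKernel σ (μ j) x :=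
    Finset.sum_nonneg fun j _ => (Real.exp_pos _).le
  have hf := sparker_eq σ μ a i x (μ i)
  rw [Function.update_eq_self] at hf
  have hp : softmaxAct σ μ i x = gaussKernel σ (μ i) x /
      (gaussKernel σ (μ i) x + ∑ j ∈ univ.erase i, gaussKernel σ (μ j) x) := by
    unfold softmaxAct
    rw [Finset.add_sum_erase _ (fun j => gaussKernel σ (μ j) x) (Finset.mem_univ i)]
  have hg := gaussKernel_hasFDerivAt σ hσ (μ i) x
  simp_rw [sparker_eq σ μ a i x]
  rw [hf, hp]
  generalize (∑ j ∈ univ.erase i, gaussKernel σ (μ j) x) = D at *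
  generalize (∑ j ∈ univ.erase i, a j * gaussKernel σ (μ j) x ^ 2) = C at *
  have hS : gaussKernel σ (μ i) x + D ≠ 0 := by positivity
  have h3 := ((((hasDerivAt_id (gaussKernel σ (μ i) x)).pow 2).const_mul (a i)).add_const C).div
    ((hasDerivAt_id (gaussKernel σ (μ i) x)).add_const D) hS
  have h4 := h3.comp_hasFDerivAt (μ i) hg
  apply HasGradientAt.gradient
  rw [hasGradientAt_iff_hasFDerivAt]
  refine h4.congr_fderiv ?_
  ext v
  simp
  field_simp
end

section
/- Bound on the model outside all spheres of influence: let α ∈ (0,1) and let x ∈ ℝ^d be such that k_{μ_j}^σ(x) ≤ α for every j = 1,…,M. Then the SparKer model satisfies −α Σ_{j : a_j < 0} |a_j| ≤ f(x) ≤ α Σ_{j : a_j > 0} |a_j|. -/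
open Real Finset

/-- bound on the model outside all spheres of influence.  If
`k_{μ_j}^σ(x) ≤ α` for all `j`, then
`−α Σ_{j : a_j < 0} |a_j| ≤ f(x) ≤ α Σ_{j : a_j > 0} |a_j|`. -/
theorem sparker_bound_outside_spheres (d M : ℕ) (hd : 1 ≤ d)
    (σ : ℝ) (hσ : 0 < σ) (μ : Fin M → EuclideanSpace ℝ (Fin d)) (a : Fin M → ℝ)
    (x : EuclideanSpace ℝ (Fin d)) (α : ℝ) (hα : α ∈ Set.Ioo (0 : ℝ) 1)
    (hx : ∀ j, gaussKernel σ (μ j) x ≤ α) :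
    -(α * ∑ j ∈ Finset.univ.filter (fun j => a j < 0), |a j|) ≤ sparker σ μ a x ∧
    sparker σ μ a x ≤ α * ∑ j ∈ Finset.univ.filter (fun j => 0 < a j), |a j| := by
  have hk : ∀ j, 0 < gaussKernel σ (μ j) x := fun j => Real.exp_pos _
  have hw0 : ∀ i, 0 ≤ softmaxAct σ μ i x * gaussKernel σ (μ i) x := fun i =>
    mul_nonneg (div_nonneg (hk i).le (Finset.sum_nonneg fun j _ => (hk j).le)) (hk i).le
  have hw1 : ∀ i, softmaxAct σ μ i x * gaussKernel σ (μ i) x ≤ α := by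
    intro i
    have h1 : softmaxAct σ μ i x ≤ 1 :=
      div_le_one_of_le₀
        (Finset.single_le_sum (f := fun j => gaussKernel σ (μ j) x)
          (fun j _ => (hk j).le) (Finset.mem_univ i))
        (Finset.sum_nonneg fun j _ => (hk j).le)
    exact (mul_le_of_le_one_left (hk i).le h1).trans (hx i)
  unfold sparker
  rw [Finset.mul_sum, Finset.mul_sum, Finset.sum_filter, Finset.sum_filter,
    ← Finset.sum_neg_distrib]
  constructor
  · refine Finset.sum_le_sum fun i _ => ?_
    split_ifs with h
    · rw [abs_of_neg h]
      nlinarith [hw1 i]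
    · rw [neg_zero]
      exact mul_nonneg (not_lt.mp h) (hw0 i)
  · refine Finset.sum_le_sum fun i _ => ?_
    split_ifs with h
    · rw [abs_of_pos h]
      nlinarith [hw1 i]
    · exact mul_nonpos_of_nonpos_of_nonneg (not_lt.mp h) (hw0 i)
end

section
/- Quantitative sphere of influence for kernel locations: let f be the SparKer model with Gaussian kernels of width σ > 0, let α ∈ (0, e^{−1/2}], and let x ∈ ℝ^d satisfy k_{μ_l}^σ(x) ≤ α for every l = 1,…,M. Then the gradient of f(x) with respect to the i-th kernel location satisfies ‖∂f(x)/∂μ_i‖ ≤ (α/σ²) · [ (2|a_i| + Σ_{j=1}^M |a_j|) · σ√(2 ln(1/α)) + Σ_{j=1}^M |a_j| · ‖μ_i − μ_j‖ ]. In particular the influence of points outside every kernel's radial α-level on the location dynamics tends to 0 linearly in α. -/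
open Real Finset

theorem radial_aux (σ R r : ℝ) (hσ : 0 < σ) (hR : σ ≤ R) (hr : R ≤ r) :
    Real.exp (-r ^ 2 / (2 * σ ^ 2)) * r ≤ Real.exp (-R ^ 2 / (2 * σ ^ 2)) * R := by
  have hR0 : 0 < R := lt_of_lt_of_le hσ hR
  have h1 : Real.exp (-R ^ 2 / (2 * σ ^ 2)) =
      Real.exp (-r ^ 2 / (2 * σ ^ 2)) * Real.exp ((r ^ 2 - R ^ 2) / (2 * σ ^ 2)) := by
    rw [← Real.exp_add]
    congr 1
    ring
  rw [h1, mul_assoc]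
  apply mul_le_mul_of_nonneg_left _ (Real.exp_pos _).le
  have h2 := Real.add_one_le_exp ((r ^ 2 - R ^ 2) / (2 * σ ^ 2))
  have h3 : (r - R) / R ≤ (r ^ 2 - R ^ 2) / (2 * σ ^ 2) := by
    rw [div_le_div_iff₀ hR0 (by positivity)]
    have h4 : 2 * σ ^ 2 ≤ (r + R) * R := by nlinarith
    nlinarith [mul_le_mul_of_nonneg_left h4 (sub_nonneg.2 hr)]
  have h5 : r = ((r - R) / R + 1) * R := by field_simp; ring
  calc r = ((r - R) / R + 1) * R := h5
    _ ≤ _ := mul_le_mul_of_nonneg_right (by linarith) hR0.le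

/-- quantitative sphere of influence for kernel locations.  If `α ∈ (0, e^{−1/2}]`
and `k_{μ_l}^σ(x) ≤ α` for every `l`, then the location gradient
`∂f(x)/∂μ_i = (1/σ²)(2 a_i k_{μ_i}^σ(x) − f(x)) p_i(x) (x − μ_i)` satisfies
`‖∂f(x)/∂μ_i‖ ≤ (α/σ²)·[(2|a_i| + Σ_j |a_j|)·σ√(2 ln(1/α)) + Σ_j |a_j|·‖μ_i − μ_j‖]`. -/
theorem location_sphere_of_influence (d M : ℕ) (hd : 1 ≤ d)
    (σ : ℝ) (hσ : 0 < σ) (μ : Fin M → EuclideanSpace ℝ (Fin d)) (a : Fin M → ℝ)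
    (i : Fin M) (x : EuclideanSpace ℝ (Fin d))
    (α : ℝ) (hα : 0 < α) (hα' : α ≤ Real.exp (-(1 / 2) : ℝ))
    (hx : ∀ l, gaussKernel σ (μ l) x ≤ α) :
    ‖((1 / σ ^ 2) * (2 * a i * gaussKernel σ (μ i) x - sparker σ μ a x) *
        softmaxAct σ μ i x) • (x - μ i)‖ ≤
      (α / σ ^ 2) *
        ((2 * |a i| + ∑ j, |a j|) * (σ * Real.sqrt (2 * Real.log (1 / α))) +
          ∑ j, |a j| * ‖μ i - μ j‖) := by
  set R := σ * Real.sqrt (2 * Real.log (1 / α)) with hRdef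
  have hlog : 1 / 2 ≤ Real.log (1 / α) := by
    have := (Real.log_le_iff_le_exp hα).2 hα'
    rw [one_div α, Real.log_inv]
    linarith
  have hs : 1 ≤ Real.sqrt (2 * Real.log (1 / α)) := by
    rw [Real.one_le_sqrt]
    linarith
  have hR : σ ≤ R := le_mul_of_one_le_right hσ.le hs
  have hR2 : R ^ 2 = σ ^ 2 * (2 * Real.log (1 / α)) := by
    rw [hRdef, mul_pow, Real.sq_sqrt (by linarith)]
  have hexp : Real.exp (-R ^ 2 / (2 * σ ^ 2)) = α := by
    have : -R ^ 2 / (2 * σ ^ 2) = Real.log α := by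
      rw [hR2, one_div, Real.log_inv]
      field_simp
    rw [this, Real.exp_log hα]
  have hR0 : 0 < R := lt_of_lt_of_le hσ hR
  have hk0 : ∀ l, 0 < gaussKernel σ (μ l) x := fun l => Real.exp_pos _
  have hrl : ∀ l, R ≤ ‖x - μ l‖ := by
    intro l
    have h := hx l
    unfold gaussKernel at h
    rw [← hexp, Real.exp_le_exp, div_le_div_iff_of_pos_right (by positivity)] at h
    exact (pow_le_pow_iff_left₀ hR0.le (norm_nonneg _) two_ne_zero).1 (by linarith)
  have hkr : ∀ l, gaussKernel σ (μ l) x * ‖x - μ l‖ ≤ α * R := by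
    intro l
    have h := radial_aux σ R ‖x - μ l‖ hσ hR (hrl l)
    rw [hexp] at h
    exact h
  have hp0 : ∀ l, 0 ≤ softmaxAct σ μ l x := fun l =>
    div_nonneg (hk0 l).le (Finset.sum_nonneg fun j _ => (hk0 j).le)
  have hp1 : ∀ l, softmaxAct σ μ l x ≤ 1 := fun l =>
    div_le_one_of_le₀ (Finset.single_le_sum (f := fun j => gaussKernel σ (μ j) x)
      (fun j _ => (hk0 j).le) (Finset.mem_univ l)) (Finset.sum_nonneg fun j _ => (hk0 j).le)
  have hterm : ∀ j, gaussKernel σ (μ j) x * ‖x - μ i‖ ≤ α * (R + ‖μ i - μ j‖) := by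
    intro j
    have ht : ‖x - μ i‖ ≤ ‖x - μ j‖ + ‖μ i - μ j‖ := by
      have := norm_sub_le (x - μ j) (μ i - μ j)
      rwa [sub_sub_sub_cancel_right] at this
    calc _ ≤ gaussKernel σ (μ j) x * (‖x - μ j‖ + ‖μ i - μ j‖) :=
          mul_le_mul_of_nonneg_left ht (hk0 j).le
      _ = gaussKernel σ (μ j) x * ‖x - μ j‖ + gaussKernel σ (μ j) x * ‖μ i - μ j‖ := by ring
      _ ≤ α * R + α * ‖μ i - μ j‖ :=
          add_le_add (hkr j) (mul_le_mul_of_nonneg_right (hx j) (norm_nonneg _))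
      _ = _ := by ring
  have hf : |sparker σ μ a x| * ‖x - μ i‖ ≤ ∑ j, |a j| * (α * (R + ‖μ i - μ j‖)) := by
    have h1 : |sparker σ μ a x| ≤ ∑ j, |a j| * gaussKernel σ (μ j) x := by
      unfold sparker
      refine (Finset.abs_sum_le_sum_abs _ _).trans (Finset.sum_le_sum fun j _ => ?_)
      rw [abs_mul, abs_of_nonneg (mul_nonneg (hp0 j) (hk0 j).le)]
      exact mul_le_mul_of_nonneg_left (mul_le_of_le_one_left (hk0 j).le (hp1 j)) (abs_nonneg _)
    refine (mul_le_mul_of_nonneg_right h1 (norm_nonneg _)).trans ?_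
    rw [Finset.sum_mul]
    refine Finset.sum_le_sum fun j _ => ?_
    rw [mul_assoc]
    exact mul_le_mul_of_nonneg_left (hterm j) (abs_nonneg _)
  have hai : |2 * a i * gaussKernel σ (μ i) x| * ‖x - μ i‖ ≤ 2 * |a i| * (α * R) := by
    rw [abs_mul, abs_mul, abs_of_pos (hk0 i), abs_two, mul_assoc]
    exact mul_le_mul_of_nonneg_left (hkr i) (by positivity)
  have hsum : ∑ j, |a j| * (α * (R + ‖μ i - μ j‖)) =
      α * ((∑ j, |a j|) * R + ∑ j, |a j| * ‖μ i - μ j‖) := by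
    rw [Finset.sum_mul, ← Finset.sum_add_distrib, Finset.mul_sum]
    exact Finset.sum_congr rfl fun j _ => by ring
  rw [hsum] at hf
  have hσ2 : 0 ≤ 1 / σ ^ 2 := by positivity
  rw [norm_smul, Real.norm_eq_abs, abs_mul, abs_mul, abs_of_nonneg hσ2, abs_of_nonneg (hp0 i)]
  set D := 2 * a i * gaussKernel σ (μ i) x - sparker σ μ a x with hD
  have hDb : |D| * ‖x - μ i‖ ≤ 2 * |a i| * (α * R) +
      α * ((∑ j, |a j|) * R + ∑ j, |a j| * ‖μ i - μ j‖) := by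
    have := mul_le_mul_of_nonneg_right
      (abs_sub (2 * a i * gaussKernel σ (μ i) x) (sparker σ μ a x)) (norm_nonneg (x - μ i))
    rw [add_mul] at this
    linarith
  calc 1 / σ ^ 2 * |D| * softmaxAct σ μ i x * ‖x - μ i‖
      = 1 / σ ^ 2 * ((|D| * ‖x - μ i‖) * softmaxAct σ μ i x) := by ring
    _ ≤ 1 / σ ^ 2 * (|D| * ‖x - μ i‖) := mul_le_mul_of_nonneg_left
        (mul_le_of_le_one_right (by positivity) (hp1 i)) hσ2
    _ ≤ 1 / σ ^ 2 * (2 * |a i| * (α * R) +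
      α * ((∑ j, |a j|) * R + ∑ j, |a j| * ‖μ i - μ j‖)) := mul_le_mul_of_nonneg_left hDb hσ2
    _ = _ := by ring
end

section
/- Locality of the location dynamics: for the SparKer model f with Gaussian kernels, the location-gradient field vanishes at infinity: the map x ↦ (1/σ²)(2a_i k_{μ_i}^σ(x) − f(x)) p_i(x) (x − μ_i) ∈ ℝ^d tends to 0 as ‖x‖ → ∞; equivalently, for every ε > 0 there is R > 0 such that ‖∂f(x)/∂μ_i‖ < ε whenever ‖x‖ > R. -/
open Real Finset

/-- locality of the location dynamics.  The location-gradient field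
`x ↦ (1/σ²)(2 a_i k_{μ_i}^σ(x) − f(x)) p_i(x) (x − μ_i)` vanishes at infinity: for every
`ε > 0` there is `R > 0` such that `‖∂f(x)/∂μ_i‖ < ε` whenever `‖x‖ > R`. -/
theorem location_gradient_vanishes_at_infinity (d M : ℕ) (hd : 1 ≤ d)
    (σ : ℝ) (hσ : 0 < σ) (μ : Fin M → EuclideanSpace ℝ (Fin d)) (a : Fin M → ℝ)
    (i : Fin M) :
    ∀ ε > 0, ∃ R > 0, ∀ x : EuclideanSpace ℝ (Fin d), R < ‖x‖ →
      ‖((1 / σ ^ 2) * (2 * a i * gaussKernel σ (μ i) x - sparker σ μ a x) *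
          softmaxAct σ μ i x) • (x - μ i)‖ < ε := by
  intro ε hε
  have hB0 : 0 ≤ ∑ j, ‖μ j‖ := Finset.sum_nonneg fun j _ => norm_nonneg _
  have hS0 : 0 ≤ ∑ j, |a j| := Finset.sum_nonneg fun j _ => abs_nonneg _
  obtain ⟨A, hA⟩ : ∃ A, A = 2 * |a i| + ∑ j, |a j| := ⟨_, rfl⟩
  have hA0 : 0 ≤ A := by rw [hA]; positivity
  have hq : 0 ≤ 16 * A / ε := by positivity
  refine ⟨2 * ∑ j, ‖μ j‖ + 16 * A / ε + 1, by positivity, fun x hx => ?_⟩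
  have hx0 : 0 < ‖x‖ := by linarith
  have hμ : ∀ j, ‖μ j‖ ≤ ‖x‖ / 2 := fun j => by
    have := Finset.single_le_sum (f := fun j => ‖μ j‖) (fun j _ => norm_nonneg _)
      (Finset.mem_univ j)
    linarith
  obtain ⟨K, hK⟩ : ∃ K, K = 8 * σ ^ 2 / ‖x‖ ^ 2 := ⟨_, rfl⟩
  have hK0 : 0 ≤ K := by rw [hK]; positivity
  have hkpos : ∀ j, 0 < gaussKernel σ (μ j) x := fun j => Real.exp_pos _
  have hk : ∀ j, gaussKernel σ (μ j) x ≤ K := fun j => by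
    have h1 : ‖x‖ / 2 ≤ ‖x - μ j‖ := by
      have := norm_sub_norm_le x (μ j)
      linarith [hμ j]
    have h2 : (‖x‖ / 2) ^ 2 ≤ ‖x - μ j‖ ^ 2 := by gcongr
    have h3 : ‖x‖ ^ 2 / (8 * σ ^ 2) ≤ ‖x - μ j‖ ^ 2 / (2 * σ ^ 2) := by
      rw [div_le_div_iff₀ (by positivity) (by positivity)]
      nlinarith [sq_nonneg σ]
    have h4 := Real.add_one_le_exp (‖x - μ j‖ ^ 2 / (2 * σ ^ 2))
    unfold gaussKernel
    rw [hK, neg_div, Real.exp_neg, ← inv_div (‖x‖ ^ 2) (8 * σ ^ 2)]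
    apply inv_anti₀ (by positivity)
    linarith
  have hp0 : ∀ j, 0 ≤ softmaxAct σ μ j x := fun j =>
    div_nonneg (hkpos j).le (Finset.sum_nonneg fun j _ => (hkpos j).le)
  have hp1 : ∀ j, softmaxAct σ μ j x ≤ 1 := fun j =>
    div_le_one_of_le₀ (Finset.single_le_sum (f := fun j => gaussKernel σ (μ j) x)
      (fun j _ => (hkpos j).le) (Finset.mem_univ j))
      (Finset.sum_nonneg fun j _ => (hkpos j).le)
  have hf : |sparker σ μ a x| ≤ (∑ j, |a j|) * K := by
    unfold sparker
    refine (Finset.abs_sum_le_sum_abs _ _).trans ?_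
    rw [Finset.sum_mul]
    refine Finset.sum_le_sum fun j _ => ?_
    rw [abs_mul, abs_mul, abs_of_nonneg (hp0 j), abs_of_pos (hkpos j)]
    have := mul_le_mul (hp1 j) (hk j) (hkpos j).le zero_le_one
    rw [one_mul] at this
    exact mul_le_mul_of_nonneg_left this (abs_nonneg _)
  have hc : |2 * a i * gaussKernel σ (μ i) x - sparker σ μ a x| ≤ A * K := by
    refine (abs_sub _ _).trans ?_
    rw [abs_mul, abs_mul, abs_of_pos (hkpos i), abs_two, hA]
    have := mul_le_mul_of_nonneg_left (hk i) (by positivity : 0 ≤ 2 * |a i|)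
    linarith
  have hn : ‖x - μ i‖ ≤ 2 * ‖x‖ := by
    have := norm_sub_le x (μ i)
    linarith [hμ i]
  have hσ2 : 0 ≤ 1 / σ ^ 2 := by positivity
  rw [norm_smul, Real.norm_eq_abs, abs_mul, abs_mul, abs_of_nonneg (hp0 i), abs_of_nonneg hσ2]
  calc _ ≤ (1 / σ ^ 2) * (A * K) * 1 * (2 * ‖x‖) := by
        have := hp0 i
        have := hp1 i
        gcongr
    _ = 16 * A / ‖x‖ := by
        rw [hK]
        field_simp
        ring
    _ < ε := by
        rw [div_lt_iff₀ hx0]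
        have : 16 * A / ε < ‖x‖ := by linarith
        rw [div_lt_iff₀ hε] at this
        linarith
end

section
/- Geometric contraction of the single-kernel convergence recursion: let σ > 0, 0 < η ≤ σ², δ_0 ≥ 0, and define δ_{t+1} = δ_t − (η δ_t/σ²)·exp(−δ_t²/(2σ²)) for t ≥ 0. Then for all t: (i) 0 ≤ δ_{t+1} ≤ δ_t (the sequence is nonnegative and nonincreasing), and (ii) δ_t ≤ δ_0 ρ^t where ρ = 1 − (η/σ²)·exp(−δ_0²/(2σ²)) ∈ [0,1). -/
open Real

/-- geometric contraction of the single-kernel convergence recursion.  Let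
`σ > 0`, `0 < η ≤ σ²`, `δ_0 ≥ 0`, and `δ_{t+1} = δ_t − (η δ_t/σ²)·exp(−δ_t²/(2σ²))`.  Then the
sequence is nonnegative and nonincreasing, `ρ = 1 − (η/σ²)·exp(−δ_0²/(2σ²)) ∈ [0,1)`, and
`δ_t ≤ δ_0 ρ^t` for all `t`. -/
theorem single_kernel_geometric_contraction (σ η : ℝ) (hσ : 0 < σ) (hη : 0 < η)
    (hησ : η ≤ σ ^ 2) (δ : ℕ → ℝ) (hδ0 : 0 ≤ δ 0)
    (hrec : ∀ t : ℕ,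
      δ (t + 1) = δ t - (η * δ t / σ ^ 2) * Real.exp (-(δ t) ^ 2 / (2 * σ ^ 2))) :
    (∀ t : ℕ, 0 ≤ δ (t + 1) ∧ δ (t + 1) ≤ δ t) ∧
    (1 - (η / σ ^ 2) * Real.exp (-(δ 0) ^ 2 / (2 * σ ^ 2)) ∈ Set.Ico (0 : ℝ) 1) ∧
    (∀ t : ℕ,
      δ t ≤ δ 0 * (1 - (η / σ ^ 2) * Real.exp (-(δ 0) ^ 2 / (2 * σ ^ 2))) ^ t) := by
  have hs : 0 < σ ^ 2 := by positivity
  have ha : 0 < η / σ ^ 2 := by positivity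
  have ha1 : η / σ ^ 2 ≤ 1 := (div_le_one hs).2 hησ
  have hrec' : ∀ t : ℕ,
      δ (t + 1) = δ t * (1 - (η / σ ^ 2) * Real.exp (-(δ t) ^ 2 / (2 * σ ^ 2))) := by
    intro t
    rw [hrec t]
    ring
  have hρ : ∀ x : ℝ, 0 ≤ 1 - (η / σ ^ 2) * Real.exp (-x ^ 2 / (2 * σ ^ 2)) ∧
      1 - (η / σ ^ 2) * Real.exp (-x ^ 2 / (2 * σ ^ 2)) < 1 := by
    intro x
    have h1 : Real.exp (-x ^ 2 / (2 * σ ^ 2)) ≤ 1 := by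
      apply Real.exp_le_one_iff.2
      apply div_nonpos_of_nonpos_of_nonneg
      · nlinarith [sq_nonneg x]
      · positivity
    have h2 := Real.exp_pos (-x ^ 2 / (2 * σ ^ 2))
    have h3 := mul_pos ha h2
    have h4 := mul_le_one₀ ha1 h2.le h1
    constructor <;> linarith
  have hnn : ∀ t, 0 ≤ δ t := by
    intro t
    induction t with
    | zero => exact hδ0
    | succ k ih =>
      rw [hrec' k]
      exact mul_nonneg ih (hρ _).1
  have hdec : ∀ t, δ (t + 1) ≤ δ t := by
    intro t
    rw [hrec' t]
    exact mul_le_of_le_one_right (hnn t) (hρ _).2.le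
  have hle : ∀ t, δ t ≤ δ 0 := fun t => antitone_nat_of_succ_le hdec (Nat.zero_le t)
  refine ⟨fun t => ⟨hnn _, hdec t⟩, ⟨(hρ _).1, (hρ _).2⟩, ?_⟩
  intro t
  induction t with
  | zero => simp
  | succ k ih =>
    rw [hrec' k, pow_succ _ k, ← mul_assoc (δ 0)]
    have hsq : (δ k) ^ 2 ≤ (δ 0) ^ 2 := pow_le_pow_left₀ (hnn k) (hle k) 2
    have hf : 1 - (η / σ ^ 2) * Real.exp (-(δ k) ^ 2 / (2 * σ ^ 2)) ≤
        1 - (η / σ ^ 2) * Real.exp (-(δ 0) ^ 2 / (2 * σ ^ 2)) := by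
      gcongr
    exact mul_le_mul ih hf (hρ _).1 (mul_nonneg hδ0 (pow_nonneg (hρ _).1 k))
end
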